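/- For Δ ∈ ℝ² with ‖Δ‖_∞ < 1/2 and any p ∈ ℕ, there exist complex scalars (c_n)_{‖n‖_∞ ≤ 2p} such that: (i) sup_{ω ∈ [-π/2, π/2]²} |e^{iΔ·ω} - Σ_n c_n e^{i n·ω}| ≤ C/p for an absolute constant C, (ii) |Σ_n c_n e^{i n·ω}| ≤ 1 for all ω ∈ ℝ², and (iii) Σ_n |c_n|² ≤ 1. -/

import Mathlib

open Real

/-!
The wave `exp (iδω)` on `[-π/2, π/2]` extends to the circle by reflection in the imaginary axis:
`f ω = exp (iδ arcsin (sin ω))`. Since `z ↦ |re z| + i im z` is a contraction, `f` is Lipschitz with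
constant `π|δ|/2` for the chordal distance. Convolving `f` with a probability kernel `K` of degree
`N` gives a trigonometric polynomial bounded by `1` whose coefficients are at most those of `f`,
and the error is at most `π|δ|/2` times `∫ |1 - e^{it}| K ≤ (∫ |1 - e^{it}|² K)^(1/2)`.

For `K = |∑ aₖ e^{ikt}|² / ∑ aₖ²` Parseval's identity turns the last integral into
`∑ (aₖ - aₖ₋₁)² / ∑ aₖ²`. This is a Rayleigh quotient of the discrete Dirichlet Laplacian, and its
ground state `aₖ = sin ((k + 1)θ)`, `θ = π/(N + 2)`, makes it equal to `2 (1 - cos θ) ≤ θ²`.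
In the plane, take products.
-/

open MeasureTheory Complex AddCircle ContinuousLinearMap
open scoped Convolution ComplexConjugate

section Averaging

variable {G E : Type*} [AddGroup G] [MeasurableSpace G] {μ : Measure G} [NormedAddCommGroup E]
  [NormedSpace ℝ E] {K : G → ℝ} {f : G → E}

lemma norm_convolution_lsmul_le {M : ℝ} (hK : ∀ t, 0 ≤ K t) (hK_one : ∫ t, K t ∂μ = 1)
    (hf : ∀ x, ‖f x‖ ≤ M) (x : G) : ‖(K ⋆[lsmul ℝ ℝ, μ] f) x‖ ≤ M := by
  have K_integrable : Integrable K μ := .of_integral_ne_zero (hK_one ▸ one_ne_zero)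
  calc ‖(K ⋆[lsmul ℝ ℝ, μ] f) x‖ ≤ ∫ t, K t * M ∂μ :=
        norm_integral_le_of_norm_le (K_integrable.mul_const M) <| .of_forall fun t ↦ by
          rw [lsmul_apply, norm_smul, Real.norm_of_nonneg (hK t)]
          exact mul_le_mul_of_nonneg_left (hf _) (hK t)
    _ = M := by rw [integral_mul_const, hK_one, one_mul]

lemma norm_sub_convolution_lsmul_le [CompleteSpace E] {g : G → ℝ} {x : G} (hK : ∀ t, 0 ≤ K t)
    (hK_one : ∫ t, K t ∂μ = 1) (hKf : ConvolutionExistsAt K f x (lsmul ℝ ℝ) μ)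
    (hgK : Integrable (fun t ↦ g t * K t) μ) (hfg : ∀ t, ‖f x - f (x - t)‖ ≤ g t) :
    ‖f x - (K ⋆[lsmul ℝ ℝ, μ] f) x‖ ≤ ∫ t, g t * K t ∂μ := by
  have K_integrable : Integrable K μ := .of_integral_ne_zero (hK_one ▸ one_ne_zero)
  have average : ∫ t, K t • (f x - f (x - t)) ∂μ = f x - (K ⋆[lsmul ℝ ℝ, μ] f) x := by
    simp only [smul_sub]
    refine (integral_sub (K_integrable.smul_const _) hKf).trans ?_
    rw [integral_smul_const, hK_one, one_smul, convolution_def]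
  rw [← average]
  refine norm_integral_le_of_norm_le hgK <| .of_forall fun t ↦ ?_
  rw [norm_smul, Real.norm_of_nonneg (hK t), mul_comm]
  exact mul_le_mul_of_nonneg_right (hfg t) (hK t)

lemma integral_mul_le_of_integral_sq_mul_le {α : Type*} [MeasurableSpace α] {μ : Measure α}
    {g K : α → ℝ} {θ : ℝ} (hθ : 0 < θ) (hK : ∀ t, 0 ≤ K t) (hK_one : ∫ t, K t ∂μ = 1)
    (hgK : Integrable (fun t ↦ g t * K t) μ) (hgK_sq : Integrable (fun t ↦ g t ^ 2 * K t) μ)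
    (h : ∫ t, g t ^ 2 * K t ∂μ ≤ θ ^ 2) : ∫ t, g t * K t ∂μ ≤ θ := by
  have K_integrable : Integrable K μ := .of_integral_ne_zero (hK_one ▸ one_ne_zero)
  have am_gm (t : α) : 2 * θ * (g t * K t) ≤ g t ^ 2 * K t + θ ^ 2 * K t := by
    linear_combination mul_nonneg (sq_nonneg (g t - θ)) (hK t)
  have integrated := integral_mono (hgK.const_mul (2 * θ))
    (hgK_sq.add (K_integrable.const_mul (θ ^ 2))) am_gm
  simp only [Pi.add_apply] at integrated
  rw [integral_const_mul, integral_add hgK_sq (K_integrable.const_mul _), integral_const_mul,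
    hK_one] at integrated
  nlinarith

end Averaging

section FourierCoefficients

variable {T : ℝ} [Fact (0 < T)] {E : Type*} [NormedAddCommGroup E]

lemma integrable_haarAddCircle_of_continuous {f : AddCircle T → E} (hf : Continuous f) :
    Integrable f haarAddCircle :=
  hf.integrable_of_hasCompactSupport (.of_compactSpace f)

theorem sum_sq_norm_fourierCoeff_le (f : C(AddCircle T, ℂ)) (s : Finset ℤ) :
    ∑ n ∈ s, ‖fourierCoeff f n‖ ^ 2 ≤ ‖f‖ ^ 2 := by
  have parseval := hasSum_sq_fourierCoeff (ContinuousMap.toLp 2 haarAddCircle ℂ f)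
  simp_rw [fourierCoeff_toLp] at parseval
  calc ∑ n ∈ s, ‖fourierCoeff f n‖ ^ 2
      ≤ ∫ t, ‖ContinuousMap.toLp 2 haarAddCircle ℂ f t‖ ^ 2 ∂haarAddCircle :=
        sum_le_hasSum s (fun _ _ ↦ by positivity) parseval
    _ = ∫ t, ‖f t‖ ^ 2 ∂haarAddCircle := integral_congr_ae <| by
        filter_upwards [ContinuousMap.coeFn_toLp (p := 2) (𝕜 := ℂ) haarAddCircle f] with t ht
        rw [ht]
    _ ≤ ∫ _, ‖f‖ ^ 2 ∂(haarAddCircle (T := T)) :=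
        integral_mono (integrable_haarAddCircle_of_continuous (by fun_prop)) (integrable_const _)
          fun t ↦ pow_le_pow_left₀ (norm_nonneg _) (f.norm_coe_le_norm t) 2
    _ = ‖f‖ ^ 2 := by rw [integral_const, probReal_univ, one_smul]

theorem eq_sum_fourierCoeff_of_forall_notMem {f : AddCircle T → ℂ} {s : Finset ℤ}
    (hf : Continuous f) (hfs : ∀ n ∉ s, fourierCoeff f n = 0) (x : AddCircle T) :
    f x = ∑ n ∈ s, fourierCoeff f n * fourier n x := by
  let F : C(AddCircle T, ℂ) := ⟨f, hf⟩
  have hF : Summable (fourierCoeff F) := summable_of_ne_finset_zero hfs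
  exact (has_pointwise_sum_fourier_series_of_summable hF x).unique <|
    hasSum_sum_of_ne_finset_zero fun n hn ↦ smul_eq_zero_of_left (hfs n hn) _

variable [NormedSpace ℂ E]

lemma fourierCoeff_zero_eq_integral (f : AddCircle T → E) :
    fourierCoeff f 0 = ∫ t, f t ∂haarAddCircle := by
  simp [fourierCoeff]

lemma norm_fourierCoeff_le_integral_norm (f : AddCircle T → E) (n : ℤ) :
    ‖fourierCoeff f n‖ ≤ ∫ t, ‖f t‖ ∂haarAddCircle :=
  (norm_integral_le_integral_norm _).trans_eq <| by
    simp only [norm_smul, fourier_apply, Circle.norm_coe, one_mul]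

lemma integral_fourier_smul_comp_sub (f : AddCircle T → E) (n : ℤ) (x : AddCircle T) :
    ∫ t, fourier n t • f (x - t) ∂haarAddCircle = fourier n x • fourierCoeff f n := by
  rw [← integral_sub_left_eq_self _ haarAddCircle x, fourierCoeff, ← integral_smul]
  simp only [sub_sub_cancel, smul_smul]
  simp only [sub_eq_add_neg, fourier_apply, smul_add, smul_neg, neg_smul, toCircle_add,
    Circle.coe_mul]

theorem convolution_lsmul_eq_sum_fourierCoeff {K : AddCircle T → ℝ} {f : AddCircle T → E}
    {s : Finset ℤ} (hK : Continuous K) (hKs : ∀ n ∉ s, fourierCoeff (fun t ↦ (K t : ℂ)) n = 0)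
    (hf : Integrable f haarAddCircle) (x : AddCircle T) :
    (K ⋆[lsmul ℝ ℝ, haarAddCircle] f) x =
      ∑ n ∈ s, fourierCoeff (fun t ↦ (K t : ℂ)) n • fourier n x • fourierCoeff f n := by
  have expand (t : AddCircle T) : K t • f (x - t) =
      ∑ n ∈ s, fourierCoeff (fun t ↦ (K t : ℂ)) n • fourier n t • f (x - t) := by
    rw [← coe_smul, eq_sum_fourierCoeff_of_forall_notMem (by fun_prop) hKs t, Finset.sum_smul]
    simp only [mul_smul]
  have term_integrable (n : ℤ) : Integrable
      (fun t ↦ fourierCoeff (fun t ↦ (K t : ℂ)) n • fourier n t • f (x - t)) haarAddCircle :=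
    ((hf.comp_sub_left x).fourier_smul n).smul _
  simp only [convolution_lsmul, expand]
  rw [integral_finsetSum _ fun n _ ↦ term_integrable n]
  simp only [integral_smul, integral_fourier_smul_comp_sub]

lemma fourierCoeff_norm_sq_sum_fourier (s : Finset ℕ) (b : ℕ → ℂ) (n : ℤ) :
    fourierCoeff (fun t : AddCircle T ↦ ((‖∑ k ∈ s, b k * fourier k t‖ ^ 2 : ℝ) : ℂ)) n =
      ∑ j ∈ s, ∑ k ∈ s, if n = j - k then b j * conj (b k) else 0 := by
  have expand : (fun t : AddCircle T ↦ ((‖∑ k ∈ s, b k * fourier k t‖ ^ 2 : ℝ) : ℂ)) =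
      ∑ j ∈ s, ∑ k ∈ s, (b j * conj (b k)) • ⇑(fourier (j - k : ℤ)) := by
    ext t
    simp only [Finset.sum_apply, Pi.smul_apply, smul_eq_mul, sub_eq_add_neg, fourier_add,
      fourier_neg]
    push_cast
    rw [← mul_conj', map_sum, Finset.sum_mul_sum]
    simp only [map_mul, mul_mul_mul_comm]
  have term_integrable (j k : ℕ) :
      Integrable ((b j * conj (b k)) • ⇑(fourier (T := T) (j - k : ℤ))) haarAddCircle :=
    integrable_haarAddCircle_of_continuous (by fun_prop)
  rw [expand, fourierCoeff.sum _ _ fun j _ ↦ integrable_finsetSum' s fun k _ ↦ term_integrable j k]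
  simp only [fourierCoeff.sum _ _ fun k _ ↦ term_integrable _ k, fourierCoeff.const_smul,
    fourierCoeff_fourier, Finset.sum_apply, Pi.single_apply, smul_eq_mul, mul_ite, mul_one,
    mul_zero]

theorem integral_norm_sq_sum_fourier (s : Finset ℕ) (b : ℕ → ℂ) :
    ∫ t : AddCircle T, ‖∑ k ∈ s, b k * fourier k t‖ ^ 2 ∂haarAddCircle = ∑ k ∈ s, ‖b k‖ ^ 2 := by
  rw [← ofReal_inj, ← integral_complex_ofReal, ← fourierCoeff_zero_eq_integral,
    fourierCoeff_norm_sq_sum_fourier]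
  simp [eq_comm (a := (0 : ℤ)), sub_eq_zero, mul_conj']

end FourierCoefficients

section SineSequence

lemma one_sub_mul_sum_range_mul_pow {R : Type*} [CommRing R] (b : ℕ → R) (z : R) (m : ℕ) :
    (1 - z) * ∑ k ∈ Finset.range m, b (k + 1) * z ^ k =
      ∑ k ∈ Finset.range m, (b (k + 1) - b k) * z ^ k + (b 0 - b m * z ^ m) := by
  induction m with
  | zero => simp
  | succ m ih =>
    rw [Finset.sum_range_succ, Finset.sum_range_succ, mul_add, ih, pow_succ]
    ring

lemma sum_range_sin_sub_sin_sq (θ : ℝ) (m : ℕ) :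
    ∑ k ∈ Finset.range m, (Real.sin ((k + 1) * θ) - Real.sin (k * θ)) ^ 2 =
      2 * (1 - Real.cos θ) * ∑ k ∈ Finset.range m, Real.sin (k * θ) ^ 2 +
        Real.sin (m * θ) * (Real.sin (m * θ) - Real.sin ((m - 1) * θ)) := by
  induction m with
  | zero => simp
  | succ m ih =>
    have recurrence : Real.sin ((m + 1) * θ) + Real.sin ((m - 1) * θ) =
        2 * Real.cos θ * Real.sin (m * θ) := by
      rw [add_mul, sub_mul, one_mul, Real.sin_add, Real.sin_sub]
      ring
    rw [Finset.sum_range_succ, Finset.sum_range_succ, ih]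
    push_cast
    rw [add_sub_cancel_right]
    linear_combination -Real.sin (m * θ) * recurrence

lemma sum_range_sin_sq_pos (N : ℕ) :
    0 < ∑ k ∈ Finset.range (N + 1), Real.sin ((k + 1) * (π / (N + 2))) ^ 2 := by
  refine Finset.sum_pos (fun k hk ↦ pow_pos (Real.sin_pos_of_pos_of_lt_pi (by positivity) ?_) 2)
    Finset.nonempty_range_add_one
  have k_succ_lt : (k : ℝ) + 1 < N + 2 := by exact_mod_cast (by grind : k + 1 < N + 2)
  rw [mul_div_left_comm]
  exact mul_lt_of_lt_one_right pi_pos ((div_lt_one (by positivity)).mpr k_succ_lt)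

lemma sin_natCast_add_two_mul_pi_div (N : ℕ) : Real.sin ((N + 2) * (π / (N + 2))) = 0 := by
  rw [mul_div_cancel₀ _ (by positivity), Real.sin_pi]

lemma one_sub_mul_sum_range_sin_mul_pow (N : ℕ) (z : ℂ) :
    (1 - z) * ∑ k ∈ Finset.range (N + 1), (Real.sin ((k + 1) * (π / (N + 2))) : ℂ) * z ^ k =
      ∑ k ∈ Finset.range (N + 2),
        ((Real.sin ((k + 1) * (π / (N + 2))) - Real.sin (k * (π / (N + 2))) : ℝ) : ℂ) * z ^ k := by
  have last_eq_zero : Real.sin ((N + 1 + 1) * (π / (N + 2))) = 0 := by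
    rw [add_assoc, one_add_one_eq_two, sin_natCast_add_two_mul_pi_div]
  have by_parts := one_sub_mul_sum_range_mul_pow
    (fun k : ℕ ↦ (Real.sin (k * (π / (N + 2))) : ℂ)) z (N + 2)
  rw [Finset.sum_range_succ] at by_parts
  simpa only [last_eq_zero, sin_natCast_add_two_mul_pi_div, Nat.cast_add, Nat.cast_one,
    Nat.cast_ofNat, Nat.cast_zero, zero_mul, Real.sin_zero, ofReal_zero, ofReal_sub, sub_zero,
    add_zero] using by_parts

lemma sum_range_sin_sub_sin_sq_pi_div (N : ℕ) :
    ∑ k ∈ Finset.range (N + 2),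
        (Real.sin ((k + 1) * (π / (N + 2))) - Real.sin (k * (π / (N + 2)))) ^ 2 =
      2 * (1 - Real.cos (π / (N + 2))) *
        ∑ k ∈ Finset.range (N + 1), Real.sin ((k + 1) * (π / (N + 2))) ^ 2 := by
  rw [sum_range_sin_sub_sin_sq, Nat.cast_add, Nat.cast_ofNat, sin_natCast_add_two_mul_pi_div,
    Finset.sum_range_succ']
  simp

end SineSequence

section FejerKorovkin

variable {T : ℝ}

lemma fourier_natCast (k : ℕ) (t : AddCircle T) : fourier k t = (t.toCircle : ℂ) ^ k := by
  rw [fourier_apply, toCircle_zsmul, zpow_natCast, Circle.coe_pow]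

lemma norm_toCircle_sub_toCircle_sub (x t : AddCircle T) :
    ‖(x.toCircle : ℂ) - (x - t).toCircle‖ = ‖1 - (t.toCircle : ℂ)‖ := by
  have split : (x.toCircle : ℂ) = (x - t).toCircle * t.toCircle := by
    rw [← Circle.coe_mul, ← toCircle_add, sub_add_cancel]
  rw [split, norm_sub_rev, ← mul_one_sub, norm_mul, Circle.norm_coe, one_mul]

/-- The Fejér–Korovkin kernel of degree `N`, normalised to have integral `1` with respect to
`AddCircle.haarAddCircle`: among the nonnegative trigonometric polynomials of degree `N` with
integral `1`, it minimises `∫ ‖1 - e^{it}‖² K`. -/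
noncomputable def fejerKorovkinKernel (N : ℕ) (t : AddCircle T) : ℝ :=
  ‖∑ k ∈ Finset.range (N + 1), (Real.sin ((k + 1) * (π / (N + 2))) : ℂ) * fourier k t‖ ^ 2 /
    ∑ k ∈ Finset.range (N + 1), Real.sin ((k + 1) * (π / (N + 2))) ^ 2

lemma continuous_fejerKorovkinKernel (N : ℕ) : Continuous (fejerKorovkinKernel (T := T) N) := by
  unfold fejerKorovkinKernel
  fun_prop

lemma fejerKorovkinKernel_nonneg (N : ℕ) (t : AddCircle T) : 0 ≤ fejerKorovkinKernel N t := by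
  unfold fejerKorovkinKernel
  positivity

variable [Fact (0 < T)]

theorem integral_fejerKorovkinKernel (N : ℕ) :
    ∫ t : AddCircle T, fejerKorovkinKernel N t ∂haarAddCircle = 1 := by
  simp only [fejerKorovkinKernel]
  rw [integral_div, integral_norm_sq_sum_fourier]
  simp only [norm_real, Real.norm_eq_abs, sq_abs]
  exact div_self (sum_range_sin_sq_pos N).ne'

theorem fourierCoeff_fejerKorovkinKernel_eq_zero {N : ℕ} {n : ℤ}
    (hn : n ∉ Finset.Icc (-(N : ℤ)) N) :
    fourierCoeff (fun t : AddCircle T ↦ (fejerKorovkinKernel N t : ℂ)) n = 0 := by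
  simp only [fejerKorovkinKernel, div_eq_inv_mul, ofReal_mul]
  rw [fourierCoeff.const_mul, fourierCoeff_norm_sq_sum_fourier]
  refine mul_eq_zero_of_right _ (Finset.sum_eq_zero fun j hj ↦ Finset.sum_eq_zero fun k hk ↦ ?_)
  exact if_neg (by grind)

lemma norm_fourierCoeff_fejerKorovkinKernel_le_one (N : ℕ) (n : ℤ) :
    ‖fourierCoeff (fun t : AddCircle T ↦ (fejerKorovkinKernel N t : ℂ)) n‖ ≤ 1 := by
  refine (norm_fourierCoeff_le_integral_norm _ n).trans_eq ?_
  simp only [norm_real, Real.norm_of_nonneg (fejerKorovkinKernel_nonneg N _),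
    integral_fejerKorovkinKernel]

theorem integral_sq_norm_one_sub_mul_fejerKorovkinKernel (N : ℕ) :
    ∫ t : AddCircle T, ‖1 - (t.toCircle : ℂ)‖ ^ 2 * fejerKorovkinKernel N t ∂haarAddCircle =
      2 * (1 - Real.cos (π / (N + 2))) := by
  have summation_by_parts (t : AddCircle T) :
      ‖1 - (t.toCircle : ℂ)‖ ^ 2 * fejerKorovkinKernel N t =
        ‖∑ k ∈ Finset.range (N + 2), ((Real.sin ((k + 1) * (π / (N + 2))) -
          Real.sin (k * (π / (N + 2))) : ℝ) : ℂ) * fourier k t‖ ^ 2 /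
        ∑ k ∈ Finset.range (N + 1), Real.sin ((k + 1) * (π / (N + 2))) ^ 2 := by
    rw [fejerKorovkinKernel, ← mul_div_assoc, ← mul_pow, ← norm_mul]
    simp only [fourier_natCast, one_sub_mul_sum_range_sin_mul_pow]
  simp only [summation_by_parts]
  rw [integral_div, integral_norm_sq_sum_fourier]
  simp only [norm_real, Real.norm_eq_abs, sq_abs, sum_range_sin_sub_sin_sq_pi_div]
  exact mul_div_cancel_right₀ _ (sum_range_sin_sq_pos N).ne'

lemma integrable_norm_one_sub_pow_mul_fejerKorovkinKernel (N m : ℕ) :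
    Integrable (fun t : AddCircle T ↦ ‖1 - (t.toCircle : ℂ)‖ ^ m * fejerKorovkinKernel N t)
      haarAddCircle :=
  integrable_haarAddCircle_of_continuous <| by
    have := continuous_fejerKorovkinKernel (T := T) N
    have := continuous_toCircle (T := T)
    fun_prop

theorem integral_norm_one_sub_mul_fejerKorovkinKernel_le (N : ℕ) :
    ∫ t : AddCircle T, ‖1 - (t.toCircle : ℂ)‖ * fejerKorovkinKernel N t ∂haarAddCircle ≤
      π / (N + 2) := by
  refine integral_mul_le_of_integral_sq_mul_le (by positivity) (fejerKorovkinKernel_nonneg N)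
    (integral_fejerKorovkinKernel N)
    (by simpa only [pow_one] using integrable_norm_one_sub_pow_mul_fejerKorovkinKernel N 1)
    (integrable_norm_one_sub_pow_mul_fejerKorovkinKernel N 2) ?_
  rw [integral_sq_norm_one_sub_mul_fejerKorovkinKernel]
  linarith [Real.one_sub_sq_div_two_le_cos (x := π / (N + 2))]

theorem norm_sub_fejerKorovkinKernel_convolution_le {E : Type*} [NormedAddCommGroup E]
    [NormedSpace ℝ E] [CompleteSpace E] {f : AddCircle T → E} {L : ℝ} (hL : 0 ≤ L)
    (hf : Continuous f) (hfL : ∀ x y, ‖f x - f y‖ ≤ L * ‖(x.toCircle : ℂ) - y.toCircle‖)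
    (N : ℕ) (x : AddCircle T) :
    ‖f x - (fejerKorovkinKernel N ⋆[lsmul ℝ ℝ, haarAddCircle] f) x‖ ≤ L * (π / (N + 2)) := by
  have K_continuous := continuous_fejerKorovkinKernel (T := T) N
  calc ‖f x - (fejerKorovkinKernel N ⋆[lsmul ℝ ℝ, haarAddCircle] f) x‖
      ≤ ∫ t, L * ‖1 - (t.toCircle : ℂ)‖ * fejerKorovkinKernel N t ∂haarAddCircle := by
        refine norm_sub_convolution_lsmul_le (fejerKorovkinKernel_nonneg N)
          (integral_fejerKorovkinKernel N) ?_ ?_ fun t ↦ ?_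
        · exact integrable_haarAddCircle_of_continuous <| by
            simp only [lsmul_apply]
            fun_prop
        · simpa only [pow_one, mul_assoc] using
            (integrable_norm_one_sub_pow_mul_fejerKorovkinKernel N 1).const_mul L
        · exact (hfL x (x - t)).trans_eq (by rw [norm_toCircle_sub_toCircle_sub])
    _ ≤ L * (π / (N + 2)) := by
        simp only [mul_assoc, integral_const_mul]
        exact mul_le_mul_of_nonneg_left (integral_norm_one_sub_mul_fejerKorovkinKernel_le N) hL

theorem exists_trigPoly_norm_sub_le_of_lipschitz (f : C(AddCircle T, ℂ)) {L : ℝ} (hL : 0 ≤ L)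
    (hfL : ∀ x y, ‖f x - f y‖ ≤ L * ‖(x.toCircle : ℂ) - y.toCircle‖) (N : ℕ) :
    ∃ c : ℤ → ℂ, (∀ n, ‖c n‖ ≤ ‖fourierCoeff f n‖) ∧
      ∀ x, ‖f x - ∑ n ∈ Finset.Icc (-(N : ℤ)) N, c n * fourier n x‖ ≤ L * (π / (N + 2)) ∧
        ‖∑ n ∈ Finset.Icc (-(N : ℤ)) N, c n * fourier n x‖ ≤ ‖f‖ := by
  have mean_eq_sum (x : AddCircle T) := convolution_lsmul_eq_sum_fourierCoeff
    (continuous_fejerKorovkinKernel N) (fun _ ↦ fourierCoeff_fejerKorovkinKernel_eq_zero)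
    (integrable_haarAddCircle_of_continuous f.continuous) x
  simp only [smul_eq_mul, mul_comm (fourier _ _), ← mul_assoc] at mean_eq_sum
  refine ⟨fun n ↦ fourierCoeff (fun t : AddCircle T ↦ (fejerKorovkinKernel N t : ℂ)) n *
    fourierCoeff f n, fun n ↦ ?_, fun x ↦ ⟨?_, ?_⟩⟩
  · rw [norm_mul]
    exact mul_le_of_le_one_left (norm_nonneg _) (norm_fourierCoeff_fejerKorovkinKernel_le_one N n)
  · simp only [← mean_eq_sum]
    exact norm_sub_fejerKorovkinKernel_convolution_le hL f.continuous hfL N x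
  · simp only [← mean_eq_sum]
    exact norm_convolution_lsmul_le (fejerKorovkinKernel_nonneg N) (integral_fejerKorovkinKernel N)
      f.norm_coe_le_norm x

end FejerKorovkin

section FoldedWave

lemma norm_exp_I_mul_sub_exp_I_mul (u v : ℝ) :
    ‖cexp (I * u) - cexp (I * v)‖ = ‖cexp (I * (u - v : ℝ)) - 1‖ := by
  have factor : cexp (I * u) - cexp (I * v) = cexp (v * I) * (cexp (I * (u - v : ℝ)) - 1) := by
    rw [mul_sub_one, ← Complex.exp_add]
    push_cast
    ring_nf
  rw [factor, norm_mul, norm_exp_ofReal_mul_I, one_mul]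

lemma norm_exp_I_mul_sub_exp_I_mul_le (u v : ℝ) :
    ‖cexp (I * u) - cexp (I * v)‖ ≤ |u - v| := by
  rw [norm_exp_I_mul_sub_exp_I_mul]
  exact Real.norm_exp_I_mul_ofReal_sub_one_le

lemma abs_sub_le_mul_norm_exp_sub_exp {u v : ℝ} (h : |u - v| ≤ π) :
    |u - v| ≤ π / 2 * ‖cexp (I * u) - cexp (I * v)‖ := by
  have half_le : |(u - v) / 2| ≤ π / 2 := by
    rw [abs_div, abs_two]
    gcongr
  have jordan := Real.mul_abs_le_abs_sin half_le
  rw [norm_exp_I_mul_sub_exp_I_mul, norm_exp_I_mul_ofReal_sub_one, Real.norm_eq_abs, abs_mul,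
    abs_two]
  rw [abs_div, abs_two] at jordan
  have := pi_pos
  field_simp at jordan
  linarith

lemma exp_I_mul_arcsin_sin (x : ℝ) :
    cexp (I * Real.arcsin (Real.sin x)) = |Real.cos x| + Real.sin x * I := by
  rw [mul_comm, exp_mul_I, ← ofReal_cos, ← ofReal_sin, Real.cos_arcsin,
    ← Real.abs_cos_eq_sqrt_one_sub_sin_sq, Real.sin_arcsin (neg_one_le_sin x) (sin_le_one x)]

lemma norm_exp_arcsin_sin_sub_le (x y : ℝ) :
    ‖cexp (I * Real.arcsin (Real.sin x)) - cexp (I * Real.arcsin (Real.sin y))‖ ≤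
      ‖cexp (I * x) - cexp (I * y)‖ := by
  have norm_sub_eq (a b c d : ℝ) :
      ‖(a + b * I : ℂ) - (c + d * I)‖ = √((a - c) ^ 2 + (b - d) ^ 2) := by
    rw [← norm_add_mul_I]
    push_cast
    ring_nf
  have abs_cos_contracts := sq_le_sq.mpr (abs_abs_sub_abs_le (Real.cos x) (Real.cos y))
  rw [exp_I_mul_arcsin_sin, exp_I_mul_arcsin_sin, mul_comm I (x : ℂ), mul_comm I (y : ℂ),
    exp_mul_I, exp_mul_I]
  simp only [← ofReal_cos, ← ofReal_sin, norm_sub_eq]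
  gcongr

lemma abs_arcsin_sin_sub_le (x y : ℝ) :
    |Real.arcsin (Real.sin x) - Real.arcsin (Real.sin y)| ≤
      π / 2 * ‖cexp (I * x) - cexp (I * y)‖ := by
  have diff_le_pi : |Real.arcsin (Real.sin x) - Real.arcsin (Real.sin y)| ≤ π := by
    rw [abs_sub_le_iff]
    constructor <;> linarith [Real.arcsin_le_pi_div_two (Real.sin x),
      Real.arcsin_le_pi_div_two (Real.sin y), Real.neg_pi_div_two_le_arcsin (Real.sin x),
      Real.neg_pi_div_two_le_arcsin (Real.sin y)]
  refine (abs_sub_le_mul_norm_exp_sub_exp diff_le_pi).trans ?_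
  gcongr
  exact norm_exp_arcsin_sin_sub_le x y

/-- The `2π`-periodic extension of the plane wave `ω ↦ exp (iδω)` from `[-π/2, π/2]`, by reflection
at the endpoints. -/
noncomputable def foldedWave (δ : ℝ) : C(AddCircle (2 * π), ℂ) where
  toFun := Function.Periodic.lift
    (f := fun ω : ℝ ↦ cexp (I * (δ * Real.arcsin (Real.sin ω) : ℝ))) (c := 2 * π) fun ω ↦ by
      simp only [Real.sin_add_two_pi]
  continuous_toFun := continuous_coinduced_dom.mpr <| by
    change Continuous fun ω : ℝ ↦ cexp (I * (δ * Real.arcsin (Real.sin ω) : ℝ))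
    fun_prop

lemma foldedWave_coe (δ ω : ℝ) :
    foldedWave δ (ω : AddCircle (2 * π)) = cexp (I * (δ * Real.arcsin (Real.sin ω) : ℝ)) := rfl

lemma foldedWave_coe_of_mem_Icc (δ : ℝ) {ω : ℝ} (hω : ω ∈ Set.Icc (-(π / 2)) (π / 2)) :
    foldedWave δ (ω : AddCircle (2 * π)) = cexp (I * (δ * ω)) := by
  rw [foldedWave_coe, Real.arcsin_sin hω.1 hω.2, ofReal_mul]

instance fact_two_pi_pos : Fact (0 < 2 * π) := ⟨two_pi_pos⟩

lemma norm_foldedWave_le_one (δ : ℝ) : ‖foldedWave δ‖ ≤ 1 := by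
  refine (ContinuousMap.norm_le _ zero_le_one).mpr fun x ↦ ?_
  induction x using QuotientAddGroup.induction_on with
  | H ω => exact (congrArg norm (foldedWave_coe δ ω)).trans_le (norm_exp_I_mul_ofReal _).le

lemma norm_foldedWave_sub_foldedWave_le (δ : ℝ) (x y : AddCircle (2 * π)) :
    ‖foldedWave δ x - foldedWave δ y‖ ≤
      |δ| * (π / 2) * ‖(x.toCircle : ℂ) - y.toCircle‖ := by
  have toCircle_coe (ω : ℝ) : (toCircle (T := 2 * π) ω : ℂ) = cexp (I * ω) := by
    rw [toCircle_apply_mk, div_self two_pi_pos.ne', one_mul, Circle.coe_exp, mul_comm]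
  obtain ⟨u, rfl⟩ := QuotientAddGroup.mk_surjective x
  obtain ⟨v, rfl⟩ := QuotientAddGroup.mk_surjective y
  calc ‖foldedWave δ u - foldedWave δ v‖
      ≤ |δ * Real.arcsin (Real.sin u) - δ * Real.arcsin (Real.sin v)| :=
        norm_exp_I_mul_sub_exp_I_mul_le _ _
    _ = |δ| * |Real.arcsin (Real.sin u) - Real.arcsin (Real.sin v)| := by rw [← mul_sub, abs_mul]
    _ ≤ |δ| * (π / 2 * ‖cexp (I * u) - cexp (I * v)‖) := by
        gcongr
        exact abs_arcsin_sin_sub_le u v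
    _ = |δ| * (π / 2) * ‖(toCircle (T := 2 * π) u : ℂ) - toCircle (T := 2 * π) v‖ := by
        rw [toCircle_coe, toCircle_coe, mul_assoc]

lemma fourier_two_pi_coe (n : ℤ) (ω : ℝ) :
    fourier n (ω : AddCircle (2 * π)) = cexp (I * ((n : ℝ) * ω)) := by
  have pi_ne : (π : ℂ) ≠ 0 := ofReal_ne_zero.mpr pi_ne_zero
  rw [fourier_coe_apply]
  push_cast
  field_simp

theorem exists_trigPoly_norm_exp_sub_le (δ : ℝ) (N : ℕ) :
    ∃ c : ℤ → ℂ,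
      (∀ ω ∈ Set.Icc (-(π / 2)) (π / 2), ‖cexp (I * (δ * ω)) -
        ∑ n ∈ Finset.Icc (-(N : ℤ)) N, c n * cexp (I * ((n : ℝ) * ω))‖ ≤
          π ^ 2 / 2 * |δ| / (N + 2)) ∧
      (∀ ω : ℝ, ‖∑ n ∈ Finset.Icc (-(N : ℤ)) N, c n * cexp (I * ((n : ℝ) * ω))‖ ≤ 1) ∧
      ∑ n ∈ Finset.Icc (-(N : ℤ)) N, ‖c n‖ ^ 2 ≤ 1 := by
  obtain ⟨c, c_le, approx⟩ := exists_trigPoly_norm_sub_le_of_lipschitz (foldedWave δ)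
    (by positivity) (norm_foldedWave_sub_foldedWave_le δ) N
  simp only [← fourier_two_pi_coe]
  refine ⟨c, fun ω hω ↦ ?_, fun ω ↦ (approx ω).2.trans (norm_foldedWave_le_one δ), ?_⟩
  · rw [← foldedWave_coe_of_mem_Icc δ hω]
    exact (approx ω).1.trans_eq (by ring)
  · calc ∑ n ∈ Finset.Icc (-(N : ℤ)) N, ‖c n‖ ^ 2
        ≤ ∑ n ∈ Finset.Icc (-(N : ℤ)) N, ‖fourierCoeff (foldedWave δ) n‖ ^ 2 :=
          Finset.sum_le_sum fun n _ ↦ pow_le_pow_left₀ (norm_nonneg _) (c_le n) 2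
      _ ≤ ‖foldedWave δ‖ ^ 2 := sum_sq_norm_fourierCoeff_le _ _
      _ ≤ 1 := pow_le_one₀ (norm_nonneg _) (norm_foldedWave_le_one δ)

end FoldedWave

lemma norm_mul_sub_mul_le_add {R : Type*} [NonUnitalSeminormedRing R] {a b a' b' : R} (ha : ‖a‖ ≤ 1)
    (hb' : ‖b'‖ ≤ 1) : ‖a * b - a' * b'‖ ≤ ‖a - a'‖ + ‖b - b'‖ :=
  calc ‖a * b - a' * b'‖ = ‖(a - a') * b' + a * (b - b')‖ := by noncomm_ring
    _ ≤ ‖a - a'‖ * ‖b'‖ + ‖a‖ * ‖b - b'‖ := norm_add_le_of_le (norm_mul_le _ _) (norm_mul_le _ _)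
    _ ≤ ‖a - a'‖ + ‖b - b'‖ := add_le_add (mul_le_of_le_one_right (norm_nonneg _) hb')
        (mul_le_of_le_one_left (norm_nonneg _) ha)

lemma sum_Icc_prod_mul {α β R : Type*} [Preorder α] [Preorder β] [LocallyFiniteOrder α]
    [LocallyFiniteOrder β] [DecidableLE (α × β)] [NonUnitalNonAssocSemiring R] (a₁ b₁ : α)
    (a₂ b₂ : β) (f : α → R) (g : β → R) :
    ∑ n ∈ Finset.Icc (a₁, a₂) (b₁, b₂), f n.1 * g n.2 =
      (∑ m ∈ Finset.Icc a₁ b₁, f m) * ∑ n ∈ Finset.Icc a₂ b₂, g n := by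
  rw [Finset.sum_mul_sum, ← Finset.sum_product', Finset.Icc_prod_def]

theorem stmt_7_general (N : ℕ) (Δ : ℝ × ℝ) :
    ∃ c : ℤ × ℤ → ℂ,
      (∀ ω : ℝ × ℝ, ω.1 ∈ Set.Icc (-(π / 2)) (π / 2) → ω.2 ∈ Set.Icc (-(π / 2)) (π / 2) →
        ‖cexp (I * (Δ.1 * ω.1 + Δ.2 * ω.2)) -
          ∑ n ∈ Finset.Icc (-(N : ℤ), -(N : ℤ)) ((N : ℤ), (N : ℤ)),
            c n * cexp (I * ((n.1 : ℝ) * ω.1 + (n.2 : ℝ) * ω.2))‖ ≤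
          π ^ 2 / 2 * (|Δ.1| + |Δ.2|) / (N + 2)) ∧
      (∀ ω : ℝ × ℝ,
        ‖∑ n ∈ Finset.Icc (-(N : ℤ), -(N : ℤ)) ((N : ℤ), (N : ℤ)),
          c n * cexp (I * ((n.1 : ℝ) * ω.1 + (n.2 : ℝ) * ω.2))‖ ≤ 1) ∧
      ∑ n ∈ Finset.Icc (-(N : ℤ), -(N : ℤ)) ((N : ℤ), (N : ℤ)), ‖c n‖ ^ 2 ≤ 1 := by
  obtain ⟨a, a_approx, a_bound, a_sq⟩ := exists_trigPoly_norm_exp_sub_le Δ.1 N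
  obtain ⟨b, b_approx, b_bound, b_sq⟩ := exists_trigPoly_norm_exp_sub_le Δ.2 N
  refine ⟨fun n ↦ a n.1 * b n.2, ?_⟩
  simp only [mul_add I, Complex.exp_add, mul_mul_mul_comm (a _) (b _), norm_mul, mul_pow,
    sum_Icc_prod_mul _ _ _ _ (fun m ↦ ‖a m‖ ^ 2) fun n ↦ ‖b n‖ ^ 2]
  have factor (ω : ℝ × ℝ) := sum_Icc_prod_mul (-(N : ℤ)) N (-(N : ℤ)) N
    (fun n ↦ a n * cexp (I * ((n : ℝ) * ω.1))) fun n ↦ b n * cexp (I * ((n : ℝ) * ω.2))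
  simp only [factor]
  refine ⟨fun ω hω₁ hω₂ ↦ ?_, fun ω ↦ ?_, ?_⟩
  · have wave_norm : ‖cexp (I * (Δ.1 * ω.1))‖ ≤ 1 := by
      rw [← ofReal_mul, norm_exp_I_mul_ofReal]
    refine (norm_mul_sub_mul_le_add wave_norm (b_bound ω.2)).trans ?_
    linear_combination a_approx ω.1 hω₁ + b_approx ω.2 hω₂
  · rw [norm_mul]
    exact mul_le_one₀ (a_bound ω.1) (norm_nonneg _) (b_bound ω.2)
  · exact mul_le_one₀ a_sq (by positivity) b_sq

/-- Approximation of an off-grid plane wave by trigonometric polynomials: for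
`‖Δ‖_∞ < 1/2` and `p ∈ ℕ`, there are complex scalars `(c_n)_{‖n‖_∞ ≤ 2p}` with
(i) `sup_{ω ∈ [-π/2,π/2]²} |e^{iΔ·ω} - Σ_n c_n e^{i n·ω}| ≤ C/p` for an absolute
constant `C`, (ii) `|Σ_n c_n e^{i n·ω}| ≤ 1` everywhere, and (iii) `Σ_n |c_n|² ≤ 1`. -/
theorem stmt_7 :
    ∃ C : ℝ, 0 < C ∧ ∀ (p : ℕ), 1 ≤ p → ∀ Δ : ℝ × ℝ, |Δ.1| < 1 / 2 → |Δ.2| < 1 / 2 →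
      ∃ c : ℤ × ℤ → ℂ,
        (∀ ω : ℝ × ℝ, ω.1 ∈ Set.Icc (-(π / 2)) (π / 2) →
          ω.2 ∈ Set.Icc (-(π / 2)) (π / 2) →
          ‖Complex.exp (Complex.I * (Δ.1 * ω.1 + Δ.2 * ω.2)) -
            ∑ n ∈ Finset.Icc (-(2 * p : ℤ), -(2 * p : ℤ)) ((2 * p : ℤ), (2 * p : ℤ)),
              c n * Complex.exp (Complex.I * ((n.1 : ℝ) * ω.1 + (n.2 : ℝ) * ω.2))‖
            ≤ C / p) ∧
        (∀ ω : ℝ × ℝ,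
          ‖∑ n ∈ Finset.Icc (-(2 * p : ℤ), -(2 * p : ℤ)) ((2 * p : ℤ), (2 * p : ℤ)),
              c n * Complex.exp (Complex.I * ((n.1 : ℝ) * ω.1 + (n.2 : ℝ) * ω.2))‖ ≤ 1) ∧
        (∑ n ∈ Finset.Icc (-(2 * p : ℤ), -(2 * p : ℤ)) ((2 * p : ℤ), (2 * p : ℤ)),
          ‖c n‖ ^ 2 ≤ 1) := by
  refine ⟨π ^ 2 / 4, by positivity, fun p hp Δ hΔ₁ hΔ₂ ↦ ?_⟩
  obtain ⟨c, approx, bounded, sq_le⟩ := stmt_7_general (2 * p) Δ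
  push_cast at approx bounded sq_le
  refine ⟨c, fun ω hω₁ hω₂ ↦ (approx ω hω₁ hω₂).trans ?_, bounded, sq_le⟩
  calc π ^ 2 / 2 * (|Δ.1| + |Δ.2|) / (2 * p + 2)
      ≤ π ^ 2 / 2 * (1 / 2 + 1 / 2) / (2 * p) := by
        gcongr
        linarith
    _ = π ^ 2 / 4 / p := by ring
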